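/- D is a *-super SH domain of type 1 (i.e., for every nonzero nonunit x of D, xD is expressible as a *-product of finitely many ideals that are both *-super homogeneous and *-homogeneous of type 1) if and only if D is a *-IRKT in which every maximal *-ideal has height 1 (a *-generalized Krull domain). -/

import Mathlib

open scoped nonZeroDivisors

/-- A star operation on the nonzero fractional ideals of an integral domain `D`
with quotient field `K`: it fixes nonzero principal fractional ideals, commutes with
multiplication by nonzero principal fractional ideals, is extensive, monotone and
idempotent (on nonzero fractional ideals). -/
structure StarOperation (D K : Type*) [CommRing D] [IsDomain D] [Field K]
    [Algebra D K] [IsFractionRing D K] where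
  star : FractionalIdeal D⁰ K → FractionalIdeal D⁰ K
  star_spanSingleton : ∀ x : K, x ≠ 0 →
    star (FractionalIdeal.spanSingleton D⁰ x) = FractionalIdeal.spanSingleton D⁰ x
  star_smul : ∀ (x : K) (I : FractionalIdeal D⁰ K), x ≠ 0 → I ≠ 0 →
    star (FractionalIdeal.spanSingleton D⁰ x * I) = FractionalIdeal.spanSingleton D⁰ x * star I
  le_star : ∀ I : FractionalIdeal D⁰ K, I ≠ 0 → I ≤ star I
  star_mono : ∀ I J : FractionalIdeal D⁰ K, I ≠ 0 → J ≠ 0 → I ≤ J → star I ≤ star J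
  star_idem : ∀ I : FractionalIdeal D⁰ K, I ≠ 0 → star (star I) = star I

namespace StarOperation

variable {D K : Type*} [CommRing D] [IsDomain D] [Field K] [Algebra D K] [IsFractionRing D K]
variable (s : StarOperation D K)

/-- `*` has finite character: for every nonzero fractional ideal `I`, `I^*` is the union
of `J^*` over the nonzero finitely generated fractional subideals `J` of `I`. -/
def FiniteCharacter : Prop :=
  ∀ I : FractionalIdeal D⁰ K, I ≠ 0 → ∀ x ∈ s.star I,
    ∃ J : FractionalIdeal D⁰ K, J ≠ 0 ∧ (J : Submodule D K).FG ∧ J ≤ I ∧ x ∈ s.star J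

/-- A (nonzero) integral ideal `I` of `D` is a `*`-ideal if `I^* = I`. -/
def IsStarIdeal (I : Ideal D) : Prop :=
  I ≠ ⊥ ∧ s.star (I : FractionalIdeal D⁰ K) = (I : FractionalIdeal D⁰ K)

/-- An integral ideal `I` of `D` is a `*`-ideal of finite type if `I = J^*` for some
nonzero finitely generated ideal `J`. -/
def IsFiniteTypeStarIdeal (I : Ideal D) : Prop :=
  ∃ J : Ideal D, J ≠ ⊥ ∧ J.FG ∧
    s.star (J : FractionalIdeal D⁰ K) = (I : FractionalIdeal D⁰ K)

/-- A maximal `*`-ideal: maximal among proper integral `*`-ideals. -/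
def IsMaxStarIdeal (M : Ideal D) : Prop :=
  M ≠ ⊤ ∧ s.IsStarIdeal M ∧ ∀ J : Ideal D, J ≠ ⊤ → s.IsStarIdeal J → M ≤ J → J = M

/-- `I` is `*`-homogeneous: a proper `*`-ideal of finite type such that `(J + J')^* ≠ D`
for every pair `J`, `J'` of proper `*`-ideals of finite type containing `I`. -/
def IsHomog (I : Ideal D) : Prop :=
  I ≠ ⊤ ∧ s.IsStarIdeal I ∧ s.IsFiniteTypeStarIdeal I ∧
    ∀ J J' : Ideal D, J ≠ ⊤ → J' ≠ ⊤ → s.IsStarIdeal J → s.IsStarIdeal J' →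
      s.IsFiniteTypeStarIdeal J → s.IsFiniteTypeStarIdeal J' → I ≤ J → I ≤ J' →
      s.star ((J + J' : Ideal D) : FractionalIdeal D⁰ K) ≠ 1

/-- The set `M(I) = {x ∈ D : (xD + I)^* ≠ D}` attached to an ideal `I`. -/
def MSet (I : Ideal D) : Set D :=
  {x : D | s.star ((Ideal.span {x} + I : Ideal D) : FractionalIdeal D⁰ K) ≠ 1}

/-- `A` and `B` are `*`-comaximal if `(A + B)^* = D`. -/
def StarComaximal (A B : Ideal D) : Prop :=
  s.star ((A + B : Ideal D) : FractionalIdeal D⁰ K) = 1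

/-- An integral ideal `I` is `*`-invertible if `(I · I⁻¹)^* = D`. -/
def StarInvertible (I : Ideal D) : Prop :=
  s.star ((I : FractionalIdeal D⁰ K) * (I : FractionalIdeal D⁰ K)⁻¹) = 1

/-- `D` is a `*`-SH domain: every principal ideal generated by a nonzero nonunit is a
`*`-product of finitely many `*`-homogeneous ideals. -/
def IsSHDomain : Prop :=
  ∀ x : D, x ≠ 0 → ¬IsUnit x →
    ∃ T : Multiset (Ideal D), (∀ J ∈ T, s.IsHomog J) ∧
      s.star ((T.prod : Ideal D) : FractionalIdeal D⁰ K) =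
        ((Ideal.span {x} : Ideal D) : FractionalIdeal D⁰ K)

/-- `D` has finite `*`-character: every nonzero nonunit lies in only finitely many
maximal `*`-ideals. -/
def FiniteStarCharacter : Prop :=
  ∀ x : D, x ≠ 0 → ¬IsUnit x → {P : Ideal D | s.IsMaxStarIdeal P ∧ x ∈ P}.Finite

end StarOperation

namespace StarOperation

variable {D K : Type*} [CommRing D] [IsDomain D] [Field K] [Algebra D K] [IsFractionRing D K]

/-- A `*`-homogeneous ideal `I` is `*`-super homogeneous if every `*`-ideal of finite
type containing `I` is `*`-invertible. -/
def IsSuperHomog (s : StarOperation D K) (I : Ideal D) : Prop :=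
  s.IsHomog I ∧ ∀ J : Ideal D, s.IsStarIdeal J → s.IsFiniteTypeStarIdeal J → I ≤ J →
    s.StarInvertible J

/-- `D` is a `*`-independent ring of Krull type: localizations at maximal `*`-ideals are
valuation domains, `D` is the locally finite intersection of these localizations (inside
`K`), and no two distinct maximal `*`-ideals contain a common nonzero prime ideal. -/
def IsIRKT (s : StarOperation D K) : Prop :=
  (∀ (P : Ideal D) [P.IsPrime], s.IsMaxStarIdeal P →
    ValuationRing (Localization.AtPrime P)) ∧
  (∀ x : K, (∀ P : Ideal D, s.IsMaxStarIdeal P →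
      ∃ a t : D, t ∉ P ∧ x * algebraMap D K t = algebraMap D K a) →
    ∃ d : D, algebraMap D K d = x) ∧
  s.FiniteStarCharacter ∧
  (∀ P Q : Ideal D, s.IsMaxStarIdeal P → s.IsMaxStarIdeal Q → P ≠ Q →
    ∀ L : Ideal D, L.IsPrime → L ≠ ⊥ → ¬(L ≤ P ⊓ Q))

end StarOperation

namespace StarOperation

variable {D K : Type*} [CommRing D] [IsDomain D] [Field K] [Algebra D K] [IsFractionRing D K]

/-- A `*`-homogeneous ideal `I` is of type 1 if for every nonzero `x ∈ M(I)` there is a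
positive integer `n` with `xⁿD_{M(I)} ∩ D ⊆ I`. -/
def IsHomogType1 (s : StarOperation D K) (I : Ideal D) : Prop :=
  s.IsHomog I ∧
    ∀ (M : Ideal D) [M.IsPrime], (M : Set D) = s.MSet I →
      ∀ x ∈ M, x ≠ (0 : D) → ∃ n : ℕ, 0 < n ∧
        Ideal.comap (algebraMap D (Localization.AtPrime M))
          (Ideal.map (algebraMap D (Localization.AtPrime M)) (Ideal.span {x ^ n})) ≤ I

end StarOperation

/-!
Whether `J^*` is `*`-invertible, for `J` finitely generated, is a local question: it means that
`J D_P` is principal for every maximal `*`-ideal `P`.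

Suppose that `D` is a `*`-super SH domain of type 1. A nonzero prime `Q` inside a maximal `*`-ideal
`P` contains a factor `I` of each of its nonzero elements. As `M(I) = P`, type 1 puts a power of
every element of `P` into `I ⊆ Q`, so `Q = P`: maximal `*`-ideals have height 1. Taking `Q = P`
gives a super homogeneous `I = I₀^* ⊆ P` with `I₀` finitely generated. Then `I₀ D_P = (c)`, and
`(c, a, b)` is principal for all `a, b ∈ D_P`, hence generated by one of the elements `c, a, b`.
Either `a` and `b` are comparable under divisibility or `c` divides both. By height 1 each nonzero
`a` divides a power of `c`, so cancelling `c` ends after finitely many steps, and `D_P` is a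
valuation domain.

Conversely, `xD` is the `*`-product of the ideals `xD_P ∩ D`, where `P` runs over the finitely many
maximal `*`-ideals containing `x`. By height 1 the radical of `xD_P ∩ D` is `P`, which makes this
ideal homogeneous and of type 1; prime avoidance gives `y` with `xD_P ∩ D = (x, y)^*`. Finitely
generated ideals of the valuation domains `D_P` are principal, so it is super homogeneous.
-/

section LocalRing

open IsLocalRing

variable {R : Type*} [CommRing R] [IsLocalRing R]

lemma exists_mem_forall_dvd_of_isPrincipal_span {S : Set R} (hS : S.Nonempty)
    (h : (Ideal.span S).IsPrincipal) : ∃ x ∈ S, ∀ y ∈ S, x ∣ y := by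
  obtain ⟨g, hg⟩ := h.principal
  rw [Ideal.submodule_span_eq] at hg
  have g_dvd : ∀ y ∈ S, g ∣ y := fun y hy =>
    Ideal.mem_span_singleton.mp (hg ▸ Ideal.subset_span hy)
  by_cases hunit : ∃ x ∈ S, ∃ u, IsUnit u ∧ x = g * u
  · obtain ⟨_, hx, u, hu, rfl⟩ := hunit
    exact ⟨_, hx, fun y hy => hu.mul_right_dvd.mpr (g_dvd y hy)⟩
  -- Otherwise `(g) = (g) 𝔪`, so `g = 0` by Nakayama.
  have hle : Ideal.span {g} ≤ Ideal.span {g} * maximalIdeal R := by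
    rw [← hg, Ideal.span_le, hg]
    intro y hy
    obtain ⟨r, rfl⟩ := g_dvd y hy
    exact Ideal.mul_mem_mul (Ideal.mem_span_singleton_self g) fun hr => hunit ⟨_, hy, r, hr, rfl⟩
  obtain ⟨m, hm, hgm⟩ :=
    Ideal.mem_span_singleton_mul.mp (hle (Ideal.mem_span_singleton_self g))
  have g_eq_zero : g = 0 :=
    (isUnit_one_sub_self_of_mem_nonunits m hm).mul_left_eq_zero.mp (by rw [mul_sub, hgm]; simp)
  obtain ⟨x, hx⟩ := hS
  have eq_zero : ∀ y ∈ S, y = 0 := fun y hy => zero_dvd_iff.mp (g_eq_zero ▸ g_dvd y hy)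
  exact ⟨x, hx, fun y hy => eq_zero y hy ▸ dvd_zero x⟩

variable [Ring.DimensionLEOne R]

lemma radical_eq_maximalIdeal_of_dimensionLEOne {I : Ideal R} (hbot : I ≠ ⊥) (htop : I ≠ ⊤) :
    I.radical = maximalIdeal R := by
  refine le_antisymm
    ((maximalIdeal.isMaximal R).isPrime.radical_le_iff.mpr (le_maximalIdeal htop)) ?_
  rw [Ideal.radical_eq_sInf]
  refine le_sInf fun Q hQ => ?_
  obtain ⟨hIQ, hQ⟩ := hQ
  exact (eq_maximalIdeal (hQ.isMaximal (ne_bot_of_le_ne_bot hbot hIQ))).ge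

lemma exists_dvd_pow_of_mem_maximalIdeal {a c : R} (ha : a ≠ 0) (hc : c ∈ maximalIdeal R) :
    ∃ n, a ∣ c ^ n := by
  by_cases hu : IsUnit a
  · exact ⟨0, hu.dvd⟩
  have hrad := radical_eq_maximalIdeal_of_dimensionLEOne (I := Ideal.span {a})
    (by simpa using ha) (by simpa [Ideal.span_singleton_eq_top] using hu)
  rw [← hrad] at hc
  exact hc.imp fun n => Ideal.mem_span_singleton.mp

lemma valuationRing_of_isPrincipal_span_triple [IsDomain R] {c : R} (hc : c ∈ maximalIdeal R)
    (hc0 : c ≠ 0) (h : ∀ a b, (Ideal.span {c, a, b}).IsPrincipal) : ValuationRing R := by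
  have dvd_or_dvd_of_dvd_pow : ∀ (n : ℕ) (a b : R), a ∣ c ^ n → a ∣ b ∨ b ∣ a := by
    intro n
    induction n with
    | zero => exact fun a b ha => Or.inl ((isUnit_of_dvd_one (pow_zero c ▸ ha)).dvd)
    | succ n ih =>
      intro a b ha
      obtain ⟨x, hx, hdvd⟩ :=
        exists_mem_forall_dvd_of_isPrincipal_span (Set.insert_nonempty c {a, b}) (h a b)
      simp only [Set.mem_insert_iff, Set.mem_singleton_iff, forall_eq_or_imp, forall_eq]
        at hx hdvd
      obtain ⟨-, hxa, hxb⟩ := hdvd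
      rcases hx with rfl | rfl | rfl
      · obtain ⟨⟨a, rfl⟩, ⟨b, rfl⟩⟩ := And.intro hxa hxb
        rw [mul_dvd_mul_iff_left hc0, mul_dvd_mul_iff_left hc0]
        exact ih a b ((mul_dvd_mul_iff_left hc0).mp (pow_succ' x n ▸ ha))
      · exact Or.inl hxb
      · exact Or.inr hxa
  refine ValuationRing.iff_dvd_total.mpr ⟨fun a b => ?_⟩
  by_cases ha : a = 0
  · exact Or.inr (ha ▸ dvd_zero b)
  · obtain ⟨n, hn⟩ := exists_dvd_pow_of_mem_maximalIdeal ha hc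
    exact dvd_or_dvd_of_dvd_pow n a b hn

end LocalRing

section CommRing

variable {R : Type*} [CommRing R]

lemma exists_mem_forall_notMem_of_forall_not_le {I : Ideal R} {S : Set (Ideal R)}
    (hS : S.Finite) (hprime : ∀ Q ∈ S, Q.IsPrime) (h : ∀ Q ∈ S, ¬I ≤ Q) :
    ∃ y ∈ I, ∀ Q ∈ S, y ∉ Q := by
  by_contra! hcover
  obtain ⟨Q, hQ, hle⟩ := (Ideal.subset_union_prime_finite (f := id) hS ⊤ ⊤
    fun Q hQ _ _ => hprime Q hQ).mp fun y hy => Set.mem_iUnion₂.mpr <| by simpa using hcover y hy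
  exact h Q hQ hle

lemma exists_fg_le_sup_of_le_sup {F A B : Ideal R} (hF : F.FG) (hle : F ≤ A ⊔ B) :
    ∃ G ≤ A, G.FG ∧ ∃ H ≤ B, H.FG ∧ F ≤ G ⊔ H := by
  induction F, hF using Submodule.fg_induction with
  | singleton x =>
    obtain ⟨a, ha, b, hb, rfl⟩ :=
      Submodule.mem_sup.mp (hle (Submodule.mem_span_singleton_self x))
    refine ⟨_, (Ideal.span_singleton_le_iff_mem A).mpr ha, Submodule.fg_span_singleton a,
      _, (Ideal.span_singleton_le_iff_mem B).mpr hb, Submodule.fg_span_singleton b, ?_⟩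
    exact (Ideal.span_singleton_le_iff_mem _).mpr
      (Submodule.add_mem_sup (Ideal.mem_span_singleton_self a) (Ideal.mem_span_singleton_self b))
  | sup F₁ F₂ _ _ ih₁ ih₂ =>
    obtain ⟨G₁, hGA₁, hG₁, H₁, hHB₁, hH₁, hF₁⟩ := ih₁ (le_sup_left.trans hle)
    obtain ⟨G₂, hGA₂, hG₂, H₂, hHB₂, hH₂, hF₂⟩ := ih₂ (le_sup_right.trans hle)
    refine ⟨_, sup_le hGA₁ hGA₂, Submodule.FG.sup hG₁ hG₂,
      _, sup_le hHB₁ hHB₂, Submodule.FG.sup hH₁ hH₂, ?_⟩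
    rw [sup_sup_sup_comm]
    exact sup_le_sup hF₁ hF₂

end CommRing

section LocalContraction

variable {R : Type*} [CommRing R] {P : Ideal R} [P.IsPrime]

variable (P) in
/-- The contraction `I R_P ∩ R` to `R` of the extension of an ideal `I` to the localization at
the prime `P`, that is, the `P`-saturation of `I`. -/
def localContraction (I : Ideal R) : Ideal R :=
  (I.map (algebraMap R (Localization.AtPrime P))).comap (algebraMap R (Localization.AtPrime P))

lemma mem_localContraction {I : Ideal R} {d : R} :
    d ∈ localContraction P I ↔ ∃ t ∉ P, t * d ∈ I :=
  IsLocalization.algebraMap_mem_map_algebraMap_iff P.primeCompl _ I d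

lemma le_localContraction (I : Ideal R) : I ≤ localContraction P I :=
  Ideal.le_comap_map

lemma localContraction_le_self {I : Ideal R} (h : I ≤ P) : localContraction P I ≤ P := by
  intro d hd
  obtain ⟨t, ht, htd⟩ := mem_localContraction.mp hd
  exact (Ideal.IsPrime.mem_or_mem ‹_› (h htd)).resolve_left ht

lemma localContraction_le_localContraction {I J : Ideal R} (h : I ≤ localContraction P J) :
    localContraction P I ≤ localContraction P J :=
  Ideal.comap_mono (Ideal.map_le_iff_le_comap.mpr h)

lemma exists_notMem_le_colon {F I : Ideal R} (hF : F.FG) (h : F ≤ localContraction P I) :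
    ∃ t ∉ P, F ≤ I.colon {t} := by
  simp only [SetLike.le_def, Submodule.mem_colon_singleton, smul_eq_mul]
  induction F, hF using Submodule.fg_induction with
  | singleton x =>
    obtain ⟨t, ht, htx⟩ := mem_localContraction.mp (h (Submodule.mem_span_singleton_self x))
    refine ⟨t, ht, fun y hy => ?_⟩
    obtain ⟨r, rfl⟩ := Submodule.mem_span_singleton.mp hy
    rw [smul_eq_mul, mul_assoc, mul_comm x]
    exact I.mul_mem_left r htx
  | sup F₁ F₂ _ _ ih₁ ih₂ =>
    obtain ⟨t₁, ht₁, h₁⟩ := ih₁ (le_sup_left.trans h)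
    obtain ⟨t₂, ht₂, h₂⟩ := ih₂ (le_sup_right.trans h)
    refine ⟨t₁ * t₂, P.primeCompl.mul_mem ht₁ ht₂, fun y hy => ?_⟩
    obtain ⟨y₁, hy₁, y₂, hy₂, rfl⟩ := Submodule.mem_sup.mp hy
    rw [show (y₁ + y₂) * (t₁ * t₂) = t₂ * (y₁ * t₁) + t₁ * (y₂ * t₂) by ring]
    exact I.add_mem (I.mul_mem_left _ (h₁ hy₁)) (I.mul_mem_left _ (h₂ hy₂))

lemma exists_span_algebraMap_eq_span (z : Localization.AtPrime P) :
    ∃ x : R, Ideal.span {algebraMap R (Localization.AtPrime P) x} = Ideal.span {z} := by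
  obtain ⟨⟨x, t⟩, hx⟩ := IsLocalization.surj P.primeCompl z
  refine ⟨x, ?_⟩
  rw [← hx, Ideal.span_singleton_mul_right_unit (IsLocalization.map_units _ t)]

lemma isPrincipal_map_iff {J : Ideal R} (hJ : J.FG) :
    (J.map (algebraMap R (Localization.AtPrime P))).IsPrincipal ↔
      ∃ j ∈ J, ∃ t ∉ P, J ≤ (Ideal.span {j}).colon {t} := by
  constructor
  · intro h
    obtain ⟨_, ⟨j, hj, rfl⟩, hdvd⟩ := exists_mem_forall_dvd_of_isPrincipal_span
      (Set.Nonempty.image _ ⟨0, J.zero_mem⟩) h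
    refine ⟨j, hj, exists_notMem_le_colon hJ fun y hy => ?_⟩
    rw [localContraction, Ideal.mem_comap, Ideal.map_span, Set.image_singleton,
      Ideal.mem_span_singleton]
    exact hdvd _ ⟨y, hy, rfl⟩
  · rintro ⟨j, hj, t, ht, hle⟩
    have hmap : J.map (algebraMap R (Localization.AtPrime P)) =
        (Ideal.span {j}).map (algebraMap R (Localization.AtPrime P)) := by
      refine le_antisymm (Ideal.map_le_iff_le_comap.mpr fun y hy => ?_)
        (Ideal.map_mono ((Ideal.span_singleton_le_iff_mem J).mpr hj))
      refine mem_localContraction.mpr ⟨t, ht, ?_⟩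
      rw [mul_comm]
      exact Submodule.mem_colon_singleton.mp (hle hy)
    rw [hmap, Ideal.map_span, Set.image_singleton]
    exact ⟨⟨_, rfl⟩⟩

variable [IsDomain R]

lemma dimensionLEOne_localization_atPrime (h : ∀ Q : Ideal R, Q.IsPrime → Q < P → Q = ⊥) :
    Ring.DimensionLEOne (Localization.AtPrime P) := by
  refine ⟨fun {𝔮} h𝔮 _ => ?_⟩
  have hbot : ⊥ < 𝔮.under R :=
    IsLocalization.bot_lt_under_prime P.primeCompl _ P.primeCompl_le_nonZeroDivisors 𝔮 h𝔮
  have hle : 𝔮.under R ≤ P := by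
    refine (Ideal.comap_mono (IsLocalRing.le_maximalIdeal Ideal.IsPrime.ne_top')).trans ?_
    exact Localization.AtPrime.under_maximalIdeal.le
  have heq : 𝔮.under R = P :=
    hle.eq_of_not_lt fun hlt => hbot.ne' (h _ inferInstance hlt)
  rw [← IsLocalization.map_under P.primeCompl _ 𝔮, heq, Localization.AtPrime.map_eq_maximalIdeal]
  infer_instance

lemma radical_localContraction [Ring.DimensionLEOne (Localization.AtPrime P)] {I : Ideal R}
    (hI : I ≠ ⊥) (hIP : I ≤ P) : (localContraction P I).radical = P := by
  have hinj : Function.Injective (algebraMap R (Localization.AtPrime P)) :=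
    IsLocalization.injective _ P.primeCompl_le_nonZeroDivisors
  have hbot : I.map (algebraMap R (Localization.AtPrime P)) ≠ ⊥ :=
    fun h => hI ((Ideal.map_eq_bot_iff_of_injective hinj).mp h)
  have htop : I.map (algebraMap R (Localization.AtPrime P)) ≠ ⊤ := fun h => by
    have := localContraction_le_self hIP
    rw [localContraction, h, Ideal.comap_top] at this
    exact Ideal.IsPrime.ne_top ‹_› (top_le_iff.mp this)
  rw [localContraction, ← Ideal.comap_radical,
    radical_eq_maximalIdeal_of_dimensionLEOne hbot htop]
  exact Localization.AtPrime.under_maximalIdeal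

end LocalContraction

lemma fractionalIdeal_mul_ne_zero {R A : Type*} [CommRing R] [CommRing A] [NoZeroDivisors A]
    [Algebra R A] {S : Submonoid R} {I J : FractionalIdeal S A} (hI : I ≠ 0) (hJ : J ≠ 0) :
    I * J ≠ 0 := by
  simp only [ne_eq, ← FractionalIdeal.coeToSubmodule_eq_bot, FractionalIdeal.coe_mul] at hI hJ ⊢
  exact mul_ne_zero hI hJ

namespace StarOperation

variable {D K : Type*} [CommRing D] [IsDomain D] [Field K] [Algebra D K] [IsFractionRing D K]

section FractionalIdeal

open FractionalIdeal

variable (s : StarOperation D K)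

lemma star_one : s.star 1 = 1 := by
  simpa only [spanSingleton_one] using s.star_spanSingleton 1 one_ne_zero

variable {s} {I J : FractionalIdeal D⁰ K}

lemma star_ne_zero (hI : I ≠ 0) : s.star I ≠ 0 :=
  ne_bot_of_le_ne_bot hI (s.le_star I hI)

lemma mul_mem_star (hI : I ≠ 0) (hJ : J ≠ 0) {k y : K} (h : ∀ x ∈ I, k * x ∈ J)
    (hy : y ∈ s.star I) : k * y ∈ s.star J := by
  by_cases hk : k = 0
  · simpa only [hk, zero_mul] using FractionalIdeal.zero_mem _
  have hle : spanSingleton D⁰ k * I ≤ J := spanSingleton_mul_le_iff.mpr h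
  have hne : spanSingleton D⁰ k * I ≠ 0 := fun h0 => hI <| by
    rw [← one_mul I, ← spanSingleton_one, ← inv_mul_cancel₀ hk, ← spanSingleton_mul_spanSingleton,
      mul_assoc, h0, mul_zero]
  refine s.star_mono _ _ hne hJ hle ?_
  rw [s.star_smul k I hk hI]
  exact mul_mem_mul (mem_spanSingleton_self _ k) hy

lemma star_star_mul (hI : I ≠ 0) (hJ : J ≠ 0) : s.star (s.star I * J) = s.star (I * J) := by
  have hIJ := fractionalIdeal_mul_ne_zero hI hJ
  have hIJ' := fractionalIdeal_mul_ne_zero (star_ne_zero (s := s) hI) hJ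
  refine le_antisymm ?_ (s.star_mono _ _ hIJ hIJ' (mul_le_mul_left (s.le_star I hI) J))
  rw [← s.star_idem _ hIJ]
  refine s.star_mono _ _ hIJ' (star_ne_zero hIJ) (mul_le.mpr fun x hx y hy => ?_)
  have := mul_mem_star hI hIJ (fun z hz => mul_comm z y ▸ mul_mem_mul hz hy) hx
  rwa [mul_comm x y]

lemma inv_star (hI : I ≠ 0) : (s.star I)⁻¹ = I⁻¹ := by
  ext k
  rw [mem_inv_iff (star_ne_zero hI), mem_inv_iff hI]
  refine ⟨fun h x hx => h x (s.le_star I hI hx), fun h x hx => ?_⟩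
  rw [← s.star_one]
  exact mul_mem_star hI one_ne_zero h hx

end FractionalIdeal

section IdealClosure

variable (s : StarOperation D K)

open Classical in
/-- The star operation as a closure operator on the integral ideals of `D`. The axioms of a star
operation say nothing about the zero ideal, which is declared closed here. -/
noncomputable def idealClosure : ClosureOperator (Ideal D) :=
  .mk₂ (fun I => if I = ⊥ then ⊥ else
      (s.star (I : FractionalIdeal D⁰ K) : Submodule D K).comap (Algebra.linearMap D K))
    (fun I => by
      split_ifs with hI
      · exact hI.le
      · exact fun d hd => s.le_star _ (FractionalIdeal.coeIdeal_ne_zero.mpr hI)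
          (FractionalIdeal.mem_coeIdeal_of_mem _ hd))
    (fun I J hIJ => by
      by_cases hI : I = ⊥
      · simp only [hI, if_true, bot_le]
      by_cases hJ : J = ⊥
      · exact absurd (by simpa [hJ] using hIJ) hI
      rw [if_neg hJ] at hIJ
      rw [if_neg hI, if_neg hJ]
      have hI' := (FractionalIdeal.coeIdeal_ne_zero (K := K)).mpr hI
      have hJ' := (FractionalIdeal.coeIdeal_ne_zero (K := K)).mpr hJ
      refine Submodule.comap_mono ?_
      rw [FractionalIdeal.coe_le_coe, ← s.star_idem _ hJ']
      refine s.star_mono _ _ hI' (star_ne_zero hJ') fun x hx => ?_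
      obtain ⟨d, hd, rfl⟩ := (FractionalIdeal.mem_coeIdeal _).mp hx
      exact hIJ hd)

variable {s} {A I J P : Ideal D} {d x : D}

lemma mem_idealClosure (hI : I ≠ ⊥) :
    d ∈ s.idealClosure I ↔ algebraMap D K d ∈ s.star (I : FractionalIdeal D⁰ K) := by
  change d ∈ (if I = ⊥ then ⊥ else
    (s.star (I : FractionalIdeal D⁰ K) : Submodule D K).comap (Algebra.linearMap D K)) ↔ _
  rw [if_neg hI]
  rfl

lemma coe_idealClosure (hI : I ≠ ⊥) :
    (s.idealClosure I : FractionalIdeal D⁰ K) = s.star (I : FractionalIdeal D⁰ K) := by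
  have hle : s.star (I : FractionalIdeal D⁰ K) ≤ 1 := by
    rw [← s.star_one]
    exact s.star_mono _ _ (FractionalIdeal.coeIdeal_ne_zero.mpr hI) one_ne_zero
      FractionalIdeal.coeIdeal_le_one
  ext x
  rw [FractionalIdeal.mem_coeIdeal]
  constructor
  · rintro ⟨d, hd, rfl⟩
    exact (mem_idealClosure hI).mp hd
  · intro hx
    obtain ⟨d, rfl⟩ := (FractionalIdeal.mem_one_iff _).mp (hle hx)
    exact ⟨d, (mem_idealClosure hI).mpr hx, rfl⟩

lemma idealClosure_ne_bot (hI : I ≠ ⊥) : s.idealClosure I ≠ ⊥ :=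
  ne_bot_of_le_ne_bot hI (s.idealClosure.le_closure I)

lemma star_eq_coe_iff (hI : I ≠ ⊥) :
    s.star (I : FractionalIdeal D⁰ K) = (J : FractionalIdeal D⁰ K) ↔ s.idealClosure I = J := by
  rw [← coe_idealClosure hI, FractionalIdeal.coeIdeal_inj]

lemma star_eq_one_iff (hI : I ≠ ⊥) :
    s.star (I : FractionalIdeal D⁰ K) = 1 ↔ s.idealClosure I = ⊤ := by
  rw [← FractionalIdeal.coeIdeal_top, star_eq_coe_iff hI]

lemma isStarIdeal_iff : s.IsStarIdeal I ↔ I ≠ ⊥ ∧ s.idealClosure.IsClosed I :=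
  and_congr_right fun hI => (star_eq_coe_iff hI).trans s.idealClosure.isClosed_iff.symm

lemma isStarIdeal_idealClosure (hI : I ≠ ⊥) : s.IsStarIdeal (s.idealClosure I) :=
  isStarIdeal_iff.mpr ⟨idealClosure_ne_bot hI, s.idealClosure.isClosed_closure I⟩

lemma isFiniteTypeStarIdeal_iff :
    s.IsFiniteTypeStarIdeal I ↔ ∃ J : Ideal D, J ≠ ⊥ ∧ J.FG ∧ s.idealClosure J = I :=
  exists_congr fun _ => and_congr_right fun hJ => and_congr_right fun _ => star_eq_coe_iff hJ

lemma IsStarIdeal.idealClosure_le (hI : s.IsStarIdeal I) (h : J ≤ I) : s.idealClosure J ≤ I :=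
  s.idealClosure.closure_min h (isStarIdeal_iff.mp hI).2

lemma IsStarIdeal.eq_top (hI : s.IsStarIdeal I) (h : J ≤ I) (hJ : s.idealClosure J = ⊤) :
    I = ⊤ :=
  top_le_iff.mp (hJ ▸ hI.idealClosure_le h)

lemma isStarIdeal_span_singleton (hx : x ≠ 0) : s.IsStarIdeal (Ideal.span {x}) := by
  refine ⟨by simpa using hx, ?_⟩
  rw [FractionalIdeal.coeIdeal_span_singleton]
  exact s.star_spanSingleton _ (by simpa using hx)

lemma IsStarIdeal.mul_mem (hI : s.IsStarIdeal I) (hA : A ≠ ⊥) {t : D} (h : ∀ a ∈ A, t * a ∈ I)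
    (hd : d ∈ s.idealClosure A) : t * d ∈ I := by
  rw [← (isStarIdeal_iff.mp hI).2.closure_eq, mem_idealClosure hI.1, map_mul]
  refine mul_mem_star (FractionalIdeal.coeIdeal_ne_zero.mpr hA)
    (FractionalIdeal.coeIdeal_ne_zero.mpr hI.1) (fun x hx => ?_) ((mem_idealClosure hA).mp hd)
  obtain ⟨a, ha, rfl⟩ := (FractionalIdeal.mem_coeIdeal _).mp hx
  exact map_mul (algebraMap D K) t a ▸ FractionalIdeal.mem_coeIdeal_of_mem _ (h a ha)

lemma IsStarIdeal.colon_singleton (hI : s.IsStarIdeal I) (t : D) :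
    s.IsStarIdeal (I.colon {t}) := by
  have hne : I.colon {t} ≠ ⊥ := ne_bot_of_le_ne_bot hI.1 Ideal.le_colon
  refine isStarIdeal_iff.mpr
    ⟨hne, s.idealClosure.isClosed_iff_closure_le.mpr fun d hd => ?_⟩
  rw [Submodule.mem_colon_singleton, smul_eq_mul, mul_comm]
  exact hI.mul_mem hne (fun a ha => mul_comm a t ▸ Submodule.mem_colon_singleton.mp ha) hd

lemma FiniteCharacter.exists_fg (hs : s.FiniteCharacter) (hd : d ∈ s.idealClosure I) :
    ∃ F ≤ I, F.FG ∧ d ∈ s.idealClosure F := by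
  by_cases hI : I = ⊥
  · exact ⟨I, le_rfl, hI ▸ Submodule.fg_bot, hd⟩
  obtain ⟨F, hF0, hF, hFI, hdF⟩ :=
    hs _ (FractionalIdeal.coeIdeal_ne_zero.mpr hI) _ ((mem_idealClosure hI).mp hd)
  obtain ⟨F, rfl⟩ := FractionalIdeal.le_one_iff_exists_coeIdeal.mp
    (hFI.trans FractionalIdeal.coeIdeal_le_one)
  exact ⟨F, (FractionalIdeal.coeIdeal_le_coeIdeal K).mp hFI,
    (FractionalIdeal.coeIdeal_fg D⁰ (IsFractionRing.injective D K) F).mp hF,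
    (mem_idealClosure (FractionalIdeal.coeIdeal_ne_zero.mp hF0)).mpr hdF⟩

lemma IsStarIdeal.localContraction (hs : s.FiniteCharacter) [P.IsPrime] (hI : s.IsStarIdeal I) :
    s.IsStarIdeal (localContraction P I) := by
  refine isStarIdeal_iff.mpr ⟨ne_bot_of_le_ne_bot hI.1 (le_localContraction I),
    s.idealClosure.isClosed_iff_closure_le.mpr fun d hd => ?_⟩
  obtain ⟨F, hFle, hF, hdF⟩ := hs.exists_fg hd
  obtain ⟨t, ht, hFt⟩ := exists_notMem_le_colon hF hFle
  have hdt := (hI.colon_singleton t).idealClosure_le hFt hdF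
  exact mem_localContraction.mpr
    ⟨t, ht, mul_comm d t ▸ Submodule.mem_colon_singleton.mp hdt⟩

end IdealClosure

section MaxStarIdeal

variable {s : StarOperation D K} {A I P Q : Ideal D} {d : D}

lemma isStarIdeal_sSup_of_directedOn (hs : s.FiniteCharacter) {c : Set (Ideal D)}
    (hne : c.Nonempty) (hdir : DirectedOn (· ≤ ·) c) (hc : ∀ I ∈ c, s.IsStarIdeal I) :
    s.IsStarIdeal (sSup c) := by
  obtain ⟨I, hI⟩ := hne
  refine isStarIdeal_iff.mpr ⟨ne_bot_of_le_ne_bot (hc I hI).1 (le_sSup hI),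
    s.idealClosure.isClosed_iff_closure_le.mpr fun d hd => ?_⟩
  obtain ⟨F, hFle, hF, hdF⟩ := hs.exists_fg hd
  obtain ⟨J, hJ, hFJ⟩ := (CompleteLattice.isCompactElement_iff_le_of_directed_sSup_le _ _).mp
    ((Submodule.fg_iff_compact F).mp hF) c ⟨I, hI⟩ hdir hFle
  exact le_sSup hJ ((hc J hJ).idealClosure_le hFJ hdF)

lemma exists_isMaxStarIdeal_le (hs : s.FiniteCharacter) (hI : s.IsStarIdeal I) (htop : I ≠ ⊤) :
    ∃ P, s.IsMaxStarIdeal P ∧ I ≤ P := by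
  have chain_bounded : ∀ c ⊆ {J : Ideal D | s.IsStarIdeal J ∧ J ≠ ⊤}, IsChain (· ≤ ·) c →
      ∀ J ∈ c, ∃ ub ∈ {J : Ideal D | s.IsStarIdeal J ∧ J ≠ ⊤}, ∀ z ∈ c, z ≤ ub := by
    intro c hc hchain J hJ
    refine ⟨sSup c, ⟨isStarIdeal_sSup_of_directedOn hs ⟨J, hJ⟩ hchain.directedOn
      fun I hI => (hc hI).1, ?_⟩, fun _ => le_sSup⟩
    rw [Ne, Ideal.eq_top_iff_one, Submodule.mem_sSup_of_directed ⟨J, hJ⟩ hchain.directedOn]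
    rintro ⟨I, hI, h1⟩
    exact (hc hI).2 ((Ideal.eq_top_iff_one I).mpr h1)
  obtain ⟨P, hIP, hP⟩ := zorn_le_nonempty₀ _ chain_bounded I ⟨hI, htop⟩
  exact ⟨P, ⟨hP.prop.2, hP.prop.1, fun J hJ hJs hPJ => (hP.eq_of_le ⟨hJs, hJ⟩ hPJ).symm⟩, hIP⟩

lemma IsMaxStarIdeal.isPrime (hP : s.IsMaxStarIdeal P) : P.IsPrime := by
  refine ⟨hP.1, fun {a b} hab => or_iff_not_imp_right.mpr fun hb => ?_⟩
  have hcolon : P.colon {b} = P :=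
    hP.2.2 _ (fun h => hb (by simpa using Ideal.eq_top_iff_one _ |>.mp h))
      (hP.2.1.colon_singleton b) Ideal.le_colon
  rw [← hcolon]
  exact Submodule.mem_colon_singleton.mpr hab

lemma IsMaxStarIdeal.eq_of_le (hP : s.IsMaxStarIdeal P) (hQ : s.IsMaxStarIdeal Q) (h : P ≤ Q) :
    P = Q :=
  (hP.2.2 Q hQ.1 hQ.2.1 h).symm

lemma idealClosure_eq_top_iff (hs : s.FiniteCharacter) (hA : A ≠ ⊥) :
    s.idealClosure A = ⊤ ↔ ∀ P, s.IsMaxStarIdeal P → ¬A ≤ P := by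
  refine ⟨fun h P hP hAP => hP.1 (hP.2.1.eq_top hAP h), fun h => ?_⟩
  by_contra htop
  obtain ⟨P, hP, hle⟩ := exists_isMaxStarIdeal_le hs (isStarIdeal_idealClosure hA) htop
  exact h P hP ((s.idealClosure.le_closure A).trans hle)

lemma IsStarIdeal.mem_of_forall_exists_mul_mem (hs : s.FiniteCharacter) (hI : s.IsStarIdeal I)
    (h : ∀ P, s.IsMaxStarIdeal P → ∃ t ∉ P, t * d ∈ I) : d ∈ I := by
  have hcolon : s.IsStarIdeal (I.colon {d}) := hI.colon_singleton d
  have htop : I.colon {d} = ⊤ := by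
    rw [← (isStarIdeal_iff.mp hcolon).2.closure_eq, idealClosure_eq_top_iff hs hcolon.1]
    intro P hP hle
    obtain ⟨t, ht, htd⟩ := h P hP
    exact ht (hle (Submodule.mem_colon_singleton.mpr htd))
  simpa using (Ideal.eq_top_iff_one _).mp htop

end MaxStarIdeal

section Homogeneous

variable {s : StarOperation D K} {I P Q : Ideal D}

lemma IsHomog.eq_of_le (hs : s.FiniteCharacter) (hI : s.IsHomog I) (hP : s.IsMaxStarIdeal P)
    (hQ : s.IsMaxStarIdeal Q) (hIP : I ≤ P) (hIQ : I ≤ Q) : P = Q := by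
  obtain ⟨-, -, hft, not_comaximal⟩ := hI
  obtain ⟨I₀, hI₀, hI₀fg, rfl⟩ := isFiniteTypeStarIdeal_iff.mp hft
  have hne : ∀ A, I₀ ⊔ A ≠ ⊥ := fun A => ne_bot_of_le_ne_bot hI₀ le_sup_left
  have ne_top : ∀ {M A}, s.IsMaxStarIdeal M → s.idealClosure I₀ ≤ M → A ≤ M →
      s.idealClosure (I₀ ⊔ A) ≠ ⊤ := fun hM hIM hAM h =>
    hM.1 (hM.2.1.eq_top (sup_le ((s.idealClosure.le_closure I₀).trans hIM) hAM) h)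
  have finiteType : ∀ {A}, A.FG → s.IsFiniteTypeStarIdeal (s.idealClosure (I₀ ⊔ A)) := fun hA =>
    isFiniteTypeStarIdeal_iff.mpr ⟨_, hne _, Submodule.FG.sup hI₀fg hA, rfl⟩
  by_contra hPQ
  -- `1 ∈ (P + Q)^*` is witnessed by finitely generated `G ⊆ P` and `H ⊆ Q`, and then `(I₀ + G)^*`
  -- and `(I₀ + H)^*` contradict homogeneity.
  have sup_eq_top : s.idealClosure (P ⊔ Q) = ⊤ := by
    rw [idealClosure_eq_top_iff hs (ne_bot_of_le_ne_bot hP.2.1.1 le_sup_left)]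
    exact fun M hM hle => hPQ ((hP.eq_of_le hM (le_sup_left.trans hle)).trans
      (hQ.eq_of_le hM (le_sup_right.trans hle)).symm)
  obtain ⟨F, hFle, hF, h1⟩ := hs.exists_fg ((Ideal.eq_top_iff_one _).mp sup_eq_top)
  obtain ⟨G, hGP, hG, H, hHQ, hH, hFGH⟩ := exists_fg_le_sup_of_le_sup hF hFle
  refine not_comaximal _ _ (ne_top hP hIP hGP) (ne_top hQ hIQ hHQ)
    (isStarIdeal_idealClosure (hne G)) (isStarIdeal_idealClosure (hne H)) (finiteType hG)
    (finiteType hH) (s.idealClosure.monotone le_sup_left) (s.idealClosure.monotone le_sup_left) ?_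
  rw [Submodule.add_eq_sup, star_eq_one_iff
    (ne_bot_of_le_ne_bot (idealClosure_ne_bot (hne G)) le_sup_left), Ideal.eq_top_iff_one]
  refine s.idealClosure.monotone (hFGH.trans (sup_le_sup ?_ ?_)) h1
  · exact le_sup_right.trans (s.idealClosure.le_closure _)
  · exact le_sup_right.trans (s.idealClosure.le_closure _)

lemma isHomog_of_forall_eq (hs : s.FiniteCharacter) (hI : s.IsStarIdeal I)
    (hft : s.IsFiniteTypeStarIdeal I) (hP : s.IsMaxStarIdeal P) (hIP : I ≤ P)
    (h : ∀ Q, s.IsMaxStarIdeal Q → I ≤ Q → Q = P) : s.IsHomog I := by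
  have le_of_le : ∀ J, J ≠ ⊤ → s.IsStarIdeal J → I ≤ J → J ≤ P := by
    intro J htop hJ hIJ
    obtain ⟨Q, hQ, hJQ⟩ := exists_isMaxStarIdeal_le hs hJ htop
    exact h Q hQ (hIJ.trans hJQ) ▸ hJQ
  refine ⟨ne_top_of_le_ne_top hP.1 hIP, hI, hft, fun J J' hJ hJ' hJs hJs' _ _ hIJ hIJ' hone => ?_⟩
  rw [Submodule.add_eq_sup, star_eq_one_iff (ne_bot_of_le_ne_bot hJs.1 le_sup_left)] at hone
  exact hP.1 (hP.2.1.eq_top (sup_le (le_of_le J hJ hJs hIJ) (le_of_le J' hJ' hJs' hIJ')) hone)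

lemma IsHomog.mSet_eq (hs : s.FiniteCharacter) (hI : s.IsHomog I) (hP : s.IsMaxStarIdeal P)
    (hIP : I ≤ P) : s.MSet I = P := by
  ext x
  have hne : Ideal.span {x} ⊔ I ≠ ⊥ := ne_bot_of_le_ne_bot hI.2.1.1 le_sup_right
  simp only [MSet, Set.mem_ofPred_eq, Submodule.add_eq_sup, ne_eq, star_eq_one_iff hne,
    idealClosure_eq_top_iff hs hne, sup_le_iff, Ideal.span_singleton_le_iff_mem, not_forall,
    not_not, SetLike.mem_coe]
  constructor
  · rintro ⟨Q, hQ, hxQ, hIQ⟩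
    exact hI.eq_of_le hs hP hQ hIP hIQ ▸ hxQ
  · exact fun hx => ⟨P, hP, hx, hIP⟩

end Homogeneous

section Invertible

open FractionalIdeal

variable {s : StarOperation D K} {J P : Ideal D}

lemma exists_le_colon_of_not_mul_inv_le (hJ : J ≠ ⊥)
    (h : ¬(J : FractionalIdeal D⁰ K) * (J : FractionalIdeal D⁰ K)⁻¹ ≤ P) :
    ∃ j ∈ J, ∃ t ∉ P, J ≤ (Ideal.span {j}).colon {t} := by
  simp only [mul_le, mem_inv_iff (coeIdeal_ne_zero.mpr hJ)] at h
  push Not at h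
  obtain ⟨_, hx, k, hk, hjk⟩ := h
  obtain ⟨j, hj, rfl⟩ := (mem_coeIdeal _).mp hx
  have exists_eq : ∀ y ∈ J, ∃ d, algebraMap D K d = k * algebraMap D K y := fun y hy =>
    (mem_one_iff _).mp (hk _ (mem_coeIdeal_of_mem _ hy))
  obtain ⟨t, ht⟩ := exists_eq j hj
  refine ⟨j, hj, t, fun htP => hjk ?_, fun y hy => ?_⟩
  · rw [mul_comm, ← ht]
    exact mem_coeIdeal_of_mem _ htP
  · obtain ⟨d, hd⟩ := exists_eq y hy
    rw [Submodule.mem_colon_singleton, smul_eq_mul, Ideal.mem_span_singleton]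
    refine ⟨d, IsFractionRing.injective D K ?_⟩
    rw [map_mul, map_mul, ht, hd]
    ring

lemma not_mul_inv_le_of_le_colon (hJ : J ≠ ⊥) {j t : D} (hj : j ∈ J) (ht : t ∉ P)
    (hle : J ≤ (Ideal.span {j}).colon {t}) :
    ¬(J : FractionalIdeal D⁰ K) * (J : FractionalIdeal D⁰ K)⁻¹ ≤ P := by
  intro h
  simp only [SetLike.le_def, Submodule.mem_colon_singleton, smul_eq_mul,
    Ideal.mem_span_singleton] at hle
  have hinj := IsFractionRing.injective D K
  have ht0 : t ≠ 0 := fun h0 => ht (h0 ▸ P.zero_mem)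
  have hj0 : j ≠ 0 := by
    rintro rfl
    obtain ⟨y, hy, hy0⟩ := Submodule.exists_mem_ne_zero_of_ne_bot hJ
    exact mul_ne_zero hy0 ht0 (zero_dvd_iff.mp (hle hy))
  have hj0' : algebraMap D K j ≠ 0 := (map_ne_zero_iff _ hinj).mpr hj0
  have div_mem_inv : algebraMap D K t / algebraMap D K j ∈ (J : FractionalIdeal D⁰ K)⁻¹ := by
    refine (mem_inv_iff (coeIdeal_ne_zero.mpr hJ)).mpr fun x hx => ?_
    obtain ⟨y, hy, rfl⟩ := (mem_coeIdeal _).mp hx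
    obtain ⟨d, hd⟩ := hle hy
    refine (mem_one_iff _).mpr ⟨d, ?_⟩
    rw [div_mul_eq_mul_div, ← map_mul, mul_comm t, hd, map_mul, mul_div_cancel_left₀ _ hj0']
  have t_mem := h (mul_mem_mul (mem_coeIdeal_of_mem _ hj) div_mem_inv)
  rw [mul_div_cancel₀ _ hj0', mem_coeIdeal] at t_mem
  obtain ⟨t', ht', heq⟩ := t_mem
  exact ht (hinj heq ▸ ht')

lemma starInvertible_idealClosure_iff_forall_not_le (hs : s.FiniteCharacter) (hJ : J ≠ ⊥) :
    s.StarInvertible (s.idealClosure J) ↔ ∀ P, s.IsMaxStarIdeal P →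
      ¬(J : FractionalIdeal D⁰ K) * (J : FractionalIdeal D⁰ K)⁻¹ ≤ P := by
  have hJ' : (J : FractionalIdeal D⁰ K) ≠ 0 := coeIdeal_ne_zero.mpr hJ
  have hle : (J : FractionalIdeal D⁰ K) * (J : FractionalIdeal D⁰ K)⁻¹ ≤ 1 :=
    mul_one_div_le_one
  obtain ⟨A, hA⟩ := le_one_iff_exists_coeIdeal.mp hle
  have hJA : J ≤ A := by
    rw [← coeIdeal_le_coeIdeal K, hA]
    exact coe_ideal_le_self_mul_inv K J
  have hA0 : A ≠ ⊥ := ne_bot_of_le_ne_bot hJ hJA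
  have hinv : (J : FractionalIdeal D⁰ K)⁻¹ ≠ 0 := fun h => hA0 <| by
    rwa [h, mul_zero, coeIdeal_eq_zero] at hA
  rw [StarInvertible, coe_idealClosure hJ, inv_star hJ', star_star_mul hJ' hinv, ← hA,
    star_eq_one_iff hA0, idealClosure_eq_top_iff hs hA0]
  simp only [coeIdeal_le_coeIdeal]

lemma starInvertible_idealClosure_iff (hs : s.FiniteCharacter) (hJ : J ≠ ⊥) (hfg : J.FG) :
    s.StarInvertible (s.idealClosure J) ↔ ∀ (P : Ideal D) [P.IsPrime], s.IsMaxStarIdeal P →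
      (J.map (algebraMap D (Localization.AtPrime P))).IsPrincipal := by
  rw [starInvertible_idealClosure_iff_forall_not_le hs hJ]
  refine ⟨fun h P _ hP => ?_, fun h P hP => ?_⟩
  · exact (isPrincipal_map_iff hfg).mpr (exists_le_colon_of_not_mul_inv_le hJ (h P hP))
  · have := hP.isPrime
    obtain ⟨j, hj, t, ht, hle⟩ := (isPrincipal_map_iff hfg).mp (h P hP)
    exact not_mul_inv_le_of_le_colon hJ hj ht hle

end Invertible

section SuperSHType1

variable {s : StarOperation D K} {I P Q : Ideal D}

lemma exists_mem_le_of_star_prod_eq {T : Multiset (Ideal D)} (hT : ∀ J ∈ T, J ≠ ⊥)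
    (h : s.star ((T.prod : Ideal D) : FractionalIdeal D⁰ K) = (I : FractionalIdeal D⁰ K))
    (hQ : Q.IsPrime) (hIQ : I ≤ Q) : ∃ J ∈ T, J ≤ Q := by
  have hprod : T.prod ≠ ⊥ := Multiset.prod_ne_zero fun h0 => hT _ h0 rfl
  rw [star_eq_coe_iff hprod] at h
  exact (Ideal.IsPrime.multiset_prod_le hQ).mp
    ((s.idealClosure.le_closure T.prod).trans (h.le.trans hIQ))

lemma IsSHDomain.finiteStarCharacter (hs : s.FiniteCharacter) (h : s.IsSHDomain) :
    s.FiniteStarCharacter := by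
  intro x hx hu
  obtain ⟨T, hT, hprod⟩ := h x hx hu
  refine (T.toFinset.finite_toSet.biUnion (t := fun J => {P | s.IsMaxStarIdeal P ∧ J ≤ P})
    fun J hJ => Set.Subsingleton.finite ?_).subset fun P hP => ?_
  · rintro P ⟨hP, hJP⟩ Q ⟨hQ, hJQ⟩
    exact (hT J (Multiset.mem_toFinset.mp hJ)).eq_of_le hs hP hQ hJP hJQ
  · obtain ⟨hP, hxP⟩ := hP
    obtain ⟨J, hJ, hJP⟩ := exists_mem_le_of_star_prod_eq (fun J hJ => (hT J hJ).2.1.1) hprod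
      hP.isPrime ((Ideal.span_singleton_le_iff_mem P).mpr hxP)
    exact Set.mem_biUnion (Multiset.mem_toFinset.mpr hJ) ⟨hP, hJP⟩

lemma IsHomogType1.eq_of_le (hs : s.FiniteCharacter) (hI : s.IsHomogType1 I)
    (hP : s.IsMaxStarIdeal P) (hQ : Q.IsPrime) (hIQ : I ≤ Q) (hQP : Q ≤ P) : Q = P := by
  have := hP.isPrime
  refine hQP.antisymm fun x hx => ?_
  by_cases hx0 : x = 0
  · exact hx0 ▸ Q.zero_mem
  obtain ⟨n, -, hn⟩ := hI.2 P (hI.1.mSet_eq hs hP (hIQ.trans hQP)).symm x hx hx0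
  exact hQ.mem_of_pow_mem n
    (hIQ (hn (le_localContraction _ (Ideal.mem_span_singleton_self (x ^ n)))))

lemma IsSuperHomog.valuationRing (hs : s.FiniteCharacter) (hI : s.IsSuperHomog I)
    (hP : s.IsMaxStarIdeal P) (hIP : I ≤ P) [P.IsPrime]
    [Ring.DimensionLEOne (Localization.AtPrime P)] :
    ValuationRing (Localization.AtPrime P) := by
  obtain ⟨⟨-, -, hft, -⟩, invertible⟩ := hI
  obtain ⟨I₀, hI₀, hfg, rfl⟩ := isFiniteTypeStarIdeal_iff.mp hft
  have isPrincipal_map : ∀ J, I₀ ≤ J → J.FG →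
      (J.map (algebraMap D (Localization.AtPrime P))).IsPrincipal := fun J hle hJ => by
    have hJ0 := ne_bot_of_le_ne_bot hI₀ hle
    exact (starInvertible_idealClosure_iff hs hJ0 hJ).mp
      (invertible _ (isStarIdeal_idealClosure hJ0) (isFiniteTypeStarIdeal_iff.mpr ⟨J, hJ0, hJ, rfl⟩)
        (s.idealClosure.monotone hle)) P hP
  obtain ⟨c, hc⟩ := (isPrincipal_map I₀ le_rfl hfg).principal
  rw [Ideal.submodule_span_eq] at hc
  have c_mem : c ∈ IsLocalRing.maximalIdeal (Localization.AtPrime P) := by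
    rw [← Ideal.span_singleton_le_iff_mem, ← hc, ← Localization.AtPrime.map_eq_maximalIdeal]
    exact Ideal.map_mono ((s.idealClosure.le_closure I₀).trans hIP)
  have c_ne_zero : c ≠ 0 := by
    rintro rfl
    have hinj := IsLocalization.injective (Localization.AtPrime P)
      P.primeCompl_le_nonZeroDivisors
    rw [Ideal.span_singleton_zero, Ideal.map_eq_bot_iff_of_injective hinj] at hc
    exact hI₀ hc
  refine valuationRing_of_isPrincipal_span_triple c_mem c_ne_zero fun a b => ?_
  obtain ⟨a', ha⟩ := exists_span_algebraMap_eq_span a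
  obtain ⟨b', hb⟩ := exists_span_algebraMap_eq_span b
  have hspan : Ideal.span {c, a, b} =
      (I₀ ⊔ Ideal.span {a', b'}).map (algebraMap D (Localization.AtPrime P)) := by
    rw [Ideal.map_sup, Ideal.map_span, Set.image_pair, hc, Ideal.span_insert c, Ideal.span_insert a,
      Ideal.span_insert, ha, hb]
  rw [hspan]
  exact isPrincipal_map _ le_sup_left (Submodule.FG.sup hfg (Submodule.fg_span (Set.toFinite _)))

lemma exists_algebraMap_eq_of_forall_isMaxStarIdeal (hs : s.FiniteCharacter) {x : K}
    (h : ∀ P, s.IsMaxStarIdeal P →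
      ∃ a t : D, t ∉ P ∧ x * algebraMap D K t = algebraMap D K a) :
    ∃ d : D, algebraMap D K d = x := by
  obtain ⟨a, b, hb, rfl⟩ := IsFractionRing.div_surjective (A := D) x
  have hb0 := nonZeroDivisors.ne_zero hb
  have hb0' : algebraMap D K b ≠ 0 := IsFractionRing.to_map_ne_zero_of_mem_nonZeroDivisors hb
  have ha : a ∈ Ideal.span {b} := by
    refine (isStarIdeal_span_singleton hb0).mem_of_forall_exists_mul_mem hs fun P hP => ?_
    obtain ⟨c, t, ht, htc⟩ := h P hP
    refine ⟨t, ht, Ideal.mem_span_singleton.mpr ⟨c, IsFractionRing.injective D K ?_⟩⟩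
    rw [map_mul, map_mul, ← htc]
    field_simp
  obtain ⟨d, rfl⟩ := Ideal.mem_span_singleton.mp ha
  exact ⟨d, by rw [map_mul, mul_div_cancel_left₀ _ hb0']⟩

variable (s) in
/-- `D` is a `*`-super SH domain of type 1: every nonzero principal proper ideal is a `*`-product
of finitely many ideals, each `*`-super homogeneous and `*`-homogeneous of type 1. -/
def IsSuperSHType1 : Prop :=
  ∀ x : D, x ≠ 0 → ¬IsUnit x →
    ∃ T : Multiset (Ideal D), (∀ J ∈ T, s.IsSuperHomog J ∧ s.IsHomogType1 J) ∧
      s.star ((T.prod : Ideal D) : FractionalIdeal D⁰ K) =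
        ((Ideal.span {x} : Ideal D) : FractionalIdeal D⁰ K)

namespace IsSuperSHType1

lemma isSHDomain (h : s.IsSuperSHType1) : s.IsSHDomain := fun x hx hu =>
  (h x hx hu).imp fun _ ⟨hT, hprod⟩ => ⟨fun J hJ => (hT J hJ).1.1, hprod⟩

lemma exists_le (h : s.IsSuperSHType1) (hQ : Q.IsPrime) (hQ0 : Q ≠ ⊥) :
    ∃ J, s.IsSuperHomog J ∧ s.IsHomogType1 J ∧ J ≤ Q := by
  obtain ⟨x, hxQ, hx⟩ := Submodule.exists_mem_ne_zero_of_ne_bot hQ0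
  have hu : ¬IsUnit x := fun hu => hQ.ne_top (Ideal.eq_top_of_isUnit_mem Q hxQ hu)
  obtain ⟨T, hT, hprod⟩ := h x hx hu
  obtain ⟨J, hJ, hJQ⟩ := exists_mem_le_of_star_prod_eq (fun J hJ => (hT J hJ).1.1.2.1.1) hprod hQ
    ((Ideal.span_singleton_le_iff_mem Q).mpr hxQ)
  exact ⟨J, (hT J hJ).1, (hT J hJ).2, hJQ⟩

lemma eq_of_le (hs : s.FiniteCharacter) (h : s.IsSuperSHType1) (hP : s.IsMaxStarIdeal P)
    (hQ : Q.IsPrime) (hQ0 : Q ≠ ⊥) (hQP : Q ≤ P) : Q = P := by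
  obtain ⟨J, -, hJ, hJQ⟩ := h.exists_le hQ hQ0
  exact hJ.eq_of_le hs hP hQ hJQ hQP

lemma eq_bot_of_lt (hs : s.FiniteCharacter) (h : s.IsSuperSHType1) (hP : s.IsMaxStarIdeal P)
    (hQ : Q.IsPrime) (hQP : Q < P) : Q = ⊥ :=
  of_not_not fun hQ0 => hQP.ne (h.eq_of_le hs hP hQ hQ0 hQP.le)

lemma valuationRing (hs : s.FiniteCharacter) (h : s.IsSuperSHType1) (hP : s.IsMaxStarIdeal P)
    [P.IsPrime] : ValuationRing (Localization.AtPrime P) := by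
  have := dimensionLEOne_localization_atPrime fun Q hQ hQP => h.eq_bot_of_lt hs hP hQ hQP
  obtain ⟨J, hJ, -, hJP⟩ := h.exists_le ‹P.IsPrime› hP.2.1.1
  exact hJ.valuationRing hs hP hJP

lemma isIRKT (hs : s.FiniteCharacter) (h : s.IsSuperSHType1) : s.IsIRKT := by
  refine ⟨fun P _ hP => h.valuationRing hs hP,
    fun _ => exists_algebraMap_eq_of_forall_isMaxStarIdeal hs,
    h.isSHDomain.finiteStarCharacter hs, fun P Q hP hQ hPQ L hL hL0 hle => hPQ ?_⟩
  exact (h.eq_of_le hs hP hL hL0 (hle.trans inf_le_left)).symm.trans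
    (h.eq_of_le hs hQ hL hL0 (hle.trans inf_le_right))

end IsSuperSHType1

end SuperSHType1

section Components

variable {s : StarOperation D K} {I P : Ideal D}

lemma IsHomog.isSuperHomog (hs : s.FiniteCharacter) (hval : ∀ (P : Ideal D) [P.IsPrime],
    s.IsMaxStarIdeal P → ValuationRing (Localization.AtPrime P)) (hI : s.IsHomog I) :
    s.IsSuperHomog I := by
  refine ⟨hI, fun J _ hft _ => ?_⟩
  obtain ⟨J₀, hJ₀, hfg, rfl⟩ := isFiniteTypeStarIdeal_iff.mp hft
  refine (starInvertible_idealClosure_iff hs hJ₀ hfg).mpr fun P _ hP => ?_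
  have := hval P hP
  exact IsBezout.isPrincipal_of_FG _ (hfg.map _)

variable [P.IsPrime]

lemma isFiniteTypeStarIdeal_localContraction (hs : s.FiniteCharacter) (hI : s.IsStarIdeal I)
    (hfg : I.FG) (hfin : {Q | s.IsMaxStarIdeal Q ∧ I ≤ Q}.Finite)
    (huniq : ∀ Q, s.IsMaxStarIdeal Q → localContraction P I ≤ Q → Q = P) :
    s.IsFiniteTypeStarIdeal (localContraction P I) := by
  obtain ⟨y, hy, hyQ⟩ : ∃ y ∈ localContraction P I,
      ∀ Q ∈ {Q | s.IsMaxStarIdeal Q ∧ I ≤ Q} \ {P}, y ∉ Q :=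
    exists_mem_forall_notMem_of_forall_not_le hfin.sdiff (fun Q hQ => hQ.1.1.isPrime)
      fun Q hQ hle => hQ.2 (huniq Q hQ.1.1 hle)
  have hne : I ⊔ Ideal.span {y} ≠ ⊥ := ne_bot_of_le_ne_bot hI.1 le_sup_left
  have mem_closure_of_mem : ∀ d ∈ I, d ∈ s.idealClosure (I ⊔ Ideal.span {y}) := fun d hd =>
    s.idealClosure.le_closure _ (Ideal.mem_sup_left hd)
  have y_mem : y ∈ s.idealClosure (I ⊔ Ideal.span {y}) :=
    s.idealClosure.le_closure _ (Ideal.mem_sup_right (Ideal.mem_span_singleton_self y))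
  refine isFiniteTypeStarIdeal_iff.mpr
    ⟨_, hne, Submodule.FG.sup hfg (Submodule.fg_span_singleton y), le_antisymm ?_ fun d hd => ?_⟩
  · exact (hI.localContraction hs).idealClosure_le
      (sup_le (le_localContraction I) ((Ideal.span_singleton_le_iff_mem _).mpr hy))
  refine (isStarIdeal_idealClosure hne).mem_of_forall_exists_mul_mem hs fun Q hQ => ?_
  by_cases hIQ : I ≤ Q
  · by_cases hQP : Q = P
    · obtain ⟨t, ht, htd⟩ := mem_localContraction.mp hd
      exact ⟨t, hQP ▸ ht, mem_closure_of_mem _ htd⟩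
    · exact ⟨y, hyQ Q ⟨⟨hQ, hIQ⟩, hQP⟩, Ideal.mul_mem_right _ _ y_mem⟩
  · obtain ⟨t, htI, htQ⟩ := SetLike.not_le_iff_exists.mp hIQ
    exact ⟨t, htQ, Ideal.mul_mem_right _ _ (mem_closure_of_mem t htI)⟩

variable [Ring.DimensionLEOne (Localization.AtPrime P)]

lemma IsMaxStarIdeal.eq_of_localContraction_le (hP : s.IsMaxStarIdeal P) (hI : I ≠ ⊥)
    (hIP : I ≤ P) {Q : Ideal D} (hQ : s.IsMaxStarIdeal Q) (h : localContraction P I ≤ Q) :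
    Q = P := by
  refine (hP.eq_of_le hQ ?_).symm
  rw [← radical_localContraction hI hIP]
  exact hQ.isPrime.radical_le_iff.mpr h

lemma isHomog_localContraction (hs : s.FiniteCharacter) (hP : s.IsMaxStarIdeal P)
    (hI : s.IsStarIdeal I) (hfg : I.FG) (hfin : {Q | s.IsMaxStarIdeal Q ∧ I ≤ Q}.Finite)
    (hIP : I ≤ P) : s.IsHomog (localContraction P I) := by
  have huniq : ∀ Q, s.IsMaxStarIdeal Q → localContraction P I ≤ Q → Q = P := fun Q hQ =>
    hP.eq_of_localContraction_le hI.1 hIP hQ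
  exact isHomog_of_forall_eq hs (hI.localContraction hs)
    (isFiniteTypeStarIdeal_localContraction hs hI hfg hfin huniq) hP
    (localContraction_le_self hIP) huniq

lemma IsHomog.isHomogType1_localContraction (hs : s.FiniteCharacter) (hP : s.IsMaxStarIdeal P)
    (hI : I ≠ ⊥) (hIP : I ≤ P) (hhom : s.IsHomog (localContraction P I)) :
    s.IsHomogType1 (localContraction P I) := by
  refine ⟨hhom, fun M _ hM y hyM _ => ?_⟩
  obtain rfl : M = P := SetLike.coe_injective
    (hM.trans (hhom.mSet_eq hs hP (localContraction_le_self hIP)))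
  rw [← radical_localContraction hI hIP] at hyM
  obtain ⟨n, hn⟩ := hyM
  have hn0 : n ≠ 0 := by
    rintro rfl
    exact hhom.1 ((Ideal.eq_top_iff_one _).mpr (pow_zero y ▸ hn))
  exact ⟨n, Nat.pos_of_ne_zero hn0, localContraction_le_localContraction
    ((Ideal.span_singleton_le_iff_mem _).mpr hn)⟩

end Components

section Factorization

variable {s : StarOperation D K}

lemma prod_localContraction_ne_bot {I : Ideal D} (hI : I ≠ ⊥) (S : Finset (PrimeSpectrum D)) :
    ∏ P ∈ S, localContraction P.asIdeal I ≠ ⊥ :=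
  Finset.prod_ne_zero_iff.mpr fun _ _ => ne_bot_of_le_ne_bot hI (le_localContraction I)

lemma idealClosure_prod_localContraction (hs : s.FiniteCharacter) {I : Ideal D}
    (hI : s.IsStarIdeal I) {S : Finset (PrimeSpectrum D)}
    (hS : ∀ P : PrimeSpectrum D, s.IsMaxStarIdeal P.asIdeal → I ≤ P.asIdeal → P ∈ S)
    (huniq : ∀ P ∈ S, ∀ Q, s.IsMaxStarIdeal Q → localContraction P.asIdeal I ≤ Q →
      Q = P.asIdeal) :
    s.idealClosure (∏ P ∈ S, localContraction P.asIdeal I) = I := by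
  classical
  have hne := prod_localContraction_ne_bot hI.1 S
  refine le_antisymm (hI.idealClosure_le fun d hd => ?_) fun d hd => ?_
  · refine hI.mem_of_forall_exists_mul_mem hs fun P hP => ?_
    have hP' := hP.isPrime
    by_cases hIP : I ≤ P
    · have hPS := hS ⟨P, hP'⟩ hP hIP
      exact mem_localContraction.mp (Ideal.prod_le_inf.trans (Finset.inf_le hPS) hd)
    · obtain ⟨t, htI, htP⟩ := SetLike.not_le_iff_exists.mp hIP
      exact ⟨t, htP, I.mul_mem_right d htI⟩
  · refine (isStarIdeal_idealClosure hne).mem_of_forall_exists_mul_mem hs fun P hP => ?_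
    have hP' := hP.isPrime
    have hnot : ¬∏ Q ∈ S.erase ⟨P, hP'⟩, localContraction Q.asIdeal I ≤ P := by
      rw [hP'.prod_le]
      rintro ⟨Q, hQ, hle⟩
      obtain ⟨hQP, hQS⟩ := Finset.mem_erase.mp hQ
      exact hQP (PrimeSpectrum.ext (huniq Q hQS P hP hle).symm)
    obtain ⟨t, ht, htP⟩ := SetLike.not_le_iff_exists.mp hnot
    refine ⟨t, htP, s.idealClosure.le_closure _ ?_⟩
    by_cases hPS : ⟨P, hP'⟩ ∈ S
    · rw [← Finset.prod_erase_mul S _ hPS]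
      exact Ideal.mul_mem_mul ht (le_localContraction I hd)
    · rw [Finset.erase_eq_of_notMem hPS] at ht
      exact Ideal.mul_mem_right _ _ ht

lemma isSuperSHType1_of_valuationRing (hs : s.FiniteCharacter)
    (hval : ∀ (P : Ideal D) [P.IsPrime], s.IsMaxStarIdeal P →
      ValuationRing (Localization.AtPrime P))
    (hfin : s.FiniteStarCharacter)
    (hht : ∀ P, s.IsMaxStarIdeal P → ∀ Q : Ideal D, Q.IsPrime → Q < P → Q = ⊥) :
    s.IsSuperSHType1 := by
  intro x hx hu
  have hI : s.IsStarIdeal (Ideal.span {x}) := isStarIdeal_span_singleton hx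
  have hfinI : {Q | s.IsMaxStarIdeal Q ∧ Ideal.span {x} ≤ Q}.Finite := by
    simpa only [Ideal.span_singleton_le_iff_mem] using hfin x hx hu
  have hfinS := hfinI.preimage (f := PrimeSpectrum.asIdeal)
    (fun _ _ _ _ => PrimeSpectrum.ext)
  have hS : ∀ P ∈ hfinS.toFinset, s.IsMaxStarIdeal P.asIdeal ∧ Ideal.span {x} ≤ P.asIdeal :=
    fun P hP => hfinS.mem_toFinset.mp hP
  have hdim : ∀ P ∈ hfinS.toFinset, Ring.DimensionLEOne (Localization.AtPrime P.asIdeal) :=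
    fun P hP => dimensionLEOne_localization_atPrime (hht _ (hS P hP).1)
  refine ⟨hfinS.toFinset.val.map fun P => localContraction P.asIdeal (Ideal.span {x}), ?_, ?_⟩
  · intro J hJ
    obtain ⟨P, hPS, rfl⟩ := Multiset.mem_map.mp hJ
    obtain ⟨hP, hxP⟩ := hS P hPS
    have := hdim P hPS
    have hhom := isHomog_localContraction hs hP hI (Submodule.fg_span_singleton x) hfinI hxP
    exact ⟨hhom.isSuperHomog hs hval, hhom.isHomogType1_localContraction hs hP hI.1 hxP⟩
  · have hclosure := idealClosure_prod_localContraction hs hI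
      (fun P hP hxP => hfinS.mem_toFinset.mpr ⟨hP, hxP⟩) fun P hPS Q hQ hle => by
        have := hdim P hPS
        exact (hS P hPS).1.eq_of_localContraction_le hI.1 (hS P hPS).2 hQ hle
    exact (star_eq_coe_iff (prod_localContraction_ne_bot hI.1 hfinS.toFinset)).mpr hclosure

end Factorization

end StarOperation

/-- `D` is a `*`-super SH domain of type 1 iff `D` is a `*`-IRKT in which
every maximal `*`-ideal has height 1 (a `*`-generalized Krull domain). -/
theorem superSHType1_iff_GKD {D K : Type*} [CommRing D] [IsDomain D] [Field K]
    [Algebra D K] [IsFractionRing D K] (s : StarOperation D K) (hs : s.FiniteCharacter) :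
    (∀ x : D, x ≠ 0 → ¬IsUnit x →
      ∃ T : Multiset (Ideal D), (∀ J ∈ T, s.IsSuperHomog J ∧ s.IsHomogType1 J) ∧
        s.star ((T.prod : Ideal D) : FractionalIdeal D⁰ K) =
          ((Ideal.span {x} : Ideal D) : FractionalIdeal D⁰ K)) ↔
    (s.IsIRKT ∧ ∀ P : Ideal D, s.IsMaxStarIdeal P →
      P ≠ ⊥ ∧ ∀ Q : Ideal D, Q.IsPrime → Q < P → Q = ⊥) := by
  constructor
  · intro h
    have hSH : s.IsSuperSHType1 := h
    exact ⟨hSH.isIRKT hs, fun P hP => ⟨hP.2.1.1, fun Q => hSH.eq_bot_of_lt hs hP⟩⟩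
  · rintro ⟨⟨hval, -, hfin, -⟩, hht⟩
    exact StarOperation.isSuperSHType1_of_valuationRing hs hval hfin fun P hP => (hht P hP).2
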